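/- arXiv:0908.0443 — 3 statements merged into one kernel-verified Lean document; each statement's English description precedes it below -/
import Mathlib

section
/- Let K be an algebraically closed field. For λ ∈ K let σ_λ be the K-algebra automorphism of the polynomial ring K[a,b,c,d] determined by σ_λ(a) = a + λc, σ_λ(b) = b + λd, σ_λ(c) = c, σ_λ(d) = d. Then the subalgebra of invariants {f ∈ K[a,b,c,d] : σ_λ(f) = f for all λ ∈ K} equals the K-subalgebra generated by c, d and ad − bc. -/
open MvPolynomial

/-- Clearing denominators: `f(0, -z/c, c, d)` becomes polynomial in `(c, d, z)` after
multiplication by a power of `c`. -/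
lemma exists_pow_mul_eval_eq_eval {K : Type*} [Field K] (f : MvPolynomial (Fin 4) K) :
    ∃ (N : ℕ) (P : MvPolynomial (Fin 3) K), ∀ c d z : K, c ≠ 0 →
      c ^ N * eval ![0, -z / c, c, d] f = eval ![c, d, z] P := by
  induction f using MvPolynomial.induction_on with
  | C r => exact ⟨0, C r, fun c d z _ => by simp⟩
  | add p q hp hq =>
    obtain ⟨M, P, hP⟩ := hp
    obtain ⟨N, Q, hQ⟩ := hq
    refine ⟨M + N, X 0 ^ N * P + X 0 ^ M * Q, fun c d z hc => ?_⟩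
    simp only [map_add, map_mul, map_pow, eval_X, Matrix.cons_val_zero, ← hP c d z hc,
      ← hQ c d z hc]
    ring
  | mul_X p i hp =>
    obtain ⟨N, P, hP⟩ := hp
    refine ⟨N + 1, P * ![0, -X 2, X 0 * X 0, X 0 * X 1] i, fun c d z hc => ?_⟩
    rw [map_mul, map_mul, ← hP c d z hc, eval_X]
    fin_cases i <;> simp <;> field_simp <;> ring

/-- A polynomial vanishing on the hyperplane `x = 0` away from `y = 0` is divisible by `x`. -/
lemma X_zero_dvd_of_eval_eq_zero {K : Type*} [Field K] [Infinite K] (P : MvPolynomial (Fin 3) K)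
    (h : ∀ y z : K, y ≠ 0 → eval ![0, y, z] P = 0) : X 0 ∣ P := by
  set φ : MvPolynomial (Fin 3) K →ₐ[K] MvPolynomial (Fin 3) K := aeval ![0, X 1, X 2] with hφ
  have eval_φ (v : Fin 3 → K) (p) : eval v (φ p) = eval ![0, v 1, v 2] p := by
    induction p using MvPolynomial.induction_on with
    | C r => simp [hφ]
    | add p q hp hq => simp [hp, hq]
    | mul_X p i hp => rw [map_mul, map_mul, hp]; fin_cases i <;> simp [hφ]
  have hφP : φ P = 0 := by
    have : X 1 * φ P = 0 := by
      refine MvPolynomial.funext fun v => ?_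
      by_cases hv : v 1 = 0
      · simp [hv]
      · simp [eval_φ, h _ _ hv]
    exact (mul_eq_zero.mp this).resolve_left (X_ne_zero 1)
  have key : X 0 ∣ P - φ P := by
    rw [← Ideal.mem_span_singleton, ← Ideal.Quotient.mk_eq_mk_iff_sub_mem]
    have : (Ideal.Quotient.mkₐ K (Ideal.span {(X 0 : MvPolynomial (Fin 3) K)})) =
        (Ideal.Quotient.mkₐ K (Ideal.span {(X 0 : MvPolynomial (Fin 3) K)})).comp φ := by
      refine MvPolynomial.algHom_ext fun i => ?_
      fin_cases i
      · simp [hφ]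
      · simp [hφ]
      · simp [hφ]
    exact DFunLike.congr_fun this P
  simpa [hφP] using key

lemma eval_aeval_det {K : Type*} [Field K] (v : Fin 4 → K) (P : MvPolynomial (Fin 3) K) :
    eval v (aeval ![X 2, X 3, X 0 * X 3 - X 1 * X 2] P : MvPolynomial (Fin 4) K) =
      eval ![v 2, v 3, v 0 * v 3 - v 1 * v 2] P := by
  induction P using MvPolynomial.induction_on with
  | C r => simp
  | add p q hp hq => rw [map_add, map_add, map_add, hp, hq]
  | mul_X p i hp => rw [map_mul, map_mul, hp]; fin_cases i <;> simp

lemma mem_range_aeval_det_of_X_mul_mem {K : Type*} [Field K] [Infinite K]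
    {g : MvPolynomial (Fin 4) K}
    (hg : X 2 * g ∈ (aeval (R := K)
      (![X 2, X 3, X 0 * X 3 - X 1 * X 2] : Fin 3 → MvPolynomial (Fin 4) K)).range) :
    g ∈ (aeval (R := K)
      (![X 2, X 3, X 0 * X 3 - X 1 * X 2] : Fin 3 → MvPolynomial (Fin 4) K)).range := by
  obtain ⟨P, hP⟩ := hg
  obtain ⟨Q, rfl⟩ : X 0 ∣ P := by
    refine X_zero_dvd_of_eval_eq_zero P fun y z hy => ?_
    have := (eval_aeval_det ![z / y, 0, 0, y] P).symm.trans (congrArg _ hP)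
    simpa [hy] using this
  refine ⟨Q, mul_left_cancel₀ (X_ne_zero (R := K) (2 : Fin 4)) ?_⟩
  simpa using hP

lemma mem_range_aeval_det_of_X_pow_mul_mem {K : Type*} [Field K] [Infinite K]
    {g : MvPolynomial (Fin 4) K} (N : ℕ)
    (hg : X 2 ^ N * g ∈ (aeval (R := K)
      (![X 2, X 3, X 0 * X 3 - X 1 * X 2] : Fin 3 → MvPolynomial (Fin 4) K)).range) :
    g ∈ (aeval (R := K)
      (![X 2, X 3, X 0 * X 3 - X 1 * X 2] : Fin 3 → MvPolynomial (Fin 4) K)).range := by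
  induction N with
  | zero => simpa using hg
  | succ N ih =>
    rw [pow_succ', mul_assoc] at hg
    exact ih (mem_range_aeval_det_of_X_mul_mem hg)

lemma eval_aeval_unipotent {K : Type*} [Field K] (l : K) (v : Fin 4 → K)
    (f : MvPolynomial (Fin 4) K) :
    eval v (aeval ![X 0 + C l * X 2, X 1 + C l * X 3, X 2, X 3] f : MvPolynomial (Fin 4) K) =
      eval ![v 0 + l * v 2, v 1 + l * v 3, v 2, v 3] f := by
  induction f using MvPolynomial.induction_on with
  | C r => simp
  | add p q hp hq => rw [map_add, map_add, map_add, hp, hq]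
  | mul_X p i hp => rw [map_mul, map_mul, hp]; fin_cases i <;> simp

/-- **Invariants of the unipotent action on 2×2 matrices (Example 4.1).**
Over an algebraically closed field `K`, consider the `K`-algebra endomorphism
`σ_λ` of `K[a,b,c,d]` (variables `X 0 = a`, `X 1 = b`, `X 2 = c`, `X 3 = d`)
with `σ_λ(a) = a + λc`, `σ_λ(b) = b + λd`, `σ_λ(c) = c`, `σ_λ(d) = d`.
A polynomial is fixed by all `σ_λ` iff it lies in the `K`-subalgebra generated
by `c`, `d` and `ad - bc`. -/
theorem invariants_of_unipotent_action_on_matrices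
    (K : Type*) [Field K] [IsAlgClosed K] (f : MvPolynomial (Fin 4) K) :
    (∀ l : K,
        aeval ![X 0 + C l * X 2, X 1 + C l * X 3, X 2, X 3] f = f) ↔
      f ∈ Algebra.adjoin K
        ({X 2, X 3, X 0 * X 3 - X 1 * X 2} : Set (MvPolynomial (Fin 4) K)) := by
  have : Infinite K := IsAlgClosed.instInfinite
  constructor
  · intro h
    have hrange : Set.range
        (![X 2, X 3, X 0 * X 3 - X 1 * X 2] : Fin 3 → MvPolynomial (Fin 4) K) =
        {X 2, X 3, X 0 * X 3 - X 1 * X 2} := by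
      simp only [Matrix.range_cons, Matrix.range_empty, Set.union_empty, Set.singleton_union]
    rw [← hrange, Algebra.adjoin_range_eq_range_aeval]
    obtain ⟨N, P, hP⟩ := exists_pow_mul_eval_eq_eval f
    refine mem_range_aeval_det_of_X_pow_mul_mem N ⟨P, ?_⟩
    refine mul_left_cancel₀ (X_ne_zero (R := K) (2 : Fin 4)) (MvPolynomial.funext fun v => ?_)
    by_cases hv : v 2 = 0
    · simp [hv]
    · have hf : eval v f = eval ![0, -(v 0 * v 3 - v 1 * v 2) / v 2, v 2, v 3] f := by
        conv_lhs => rw [← h (-v 0 / v 2), eval_aeval_unipotent]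
        congr 2
        ext i
        fin_cases i <;> simp <;> field_simp <;> ring
      simp only [map_mul, map_pow, eval_X]
      rw [hf, hP _ _ _ hv]
      exact congrArg _ (eval_aeval_det v P)
  · intro hf l
    induction hf using Algebra.adjoin_induction with
    | mem x hx =>
      rcases hx with rfl | rfl | rfl <;> simp
      ring
    | algebraMap r => simp [algebraMap_eq]
    | add p q _ _ hp hq => rw [map_add, hp, hq]
    | mul p q _ _ hp hq => rw [map_mul, hp, hq]
end

section
/- With τ_λ as above (the ℂ-algebra automorphism of ℂ[x₁,x₂,x₃,x₄] with τ_λ(x₁) = x₁, τ_λ(x₂) = x₂ + λx₁, τ_λ(x₃) = x₃ + λx₂ + (1/2)λ²x₁, τ_λ(x₄) = x₄ + λ(x₂² − 2x₁x₃ − 1)), the algebra of invariants {f : τ_λ(f) = f for all λ ∈ ℂ} is generated as a ℂ-algebra by f₁ = x₁, f₂ = x₂² − 2x₁x₃, f₃ = x₁x₄ − x₂(x₂² − 2x₁x₃ − 1), and the polynomial f₄ with f₁·f₄ = f₃² − f₂(1−f₂)². -/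
open MvPolynomial

/-- The comorphism `τ_λ` of Winkelmann's additive group action on `ℂ⁴`:
`x₁ ↦ x₁`, `x₂ ↦ x₂ + λx₁`, `x₃ ↦ x₃ + λx₂ + (1/2)λ²x₁`,
`x₄ ↦ x₄ + λ(x₂² - 2x₁x₃ - 1)` (variables `X 0, X 1, X 2, X 3`). -/
noncomputable def winkTau (l : ℂ) :
    MvPolynomial (Fin 4) ℂ →ₐ[ℂ] MvPolynomial (Fin 4) ℂ :=
  aeval ![X 0, X 1 + C l * X 0,
          X 2 + C l * X 1 + C ((1/2) * l^2) * X 0,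
          X 3 + C l * (X 1 ^ 2 - 2 * X 0 * X 2 - 1)]

/-- `f₁ = x₁`. -/
noncomputable def winkF₁ : MvPolynomial (Fin 4) ℂ := X 0

/-- `f₂ = x₂² - 2x₁x₃`. -/
noncomputable def winkF₂ : MvPolynomial (Fin 4) ℂ := X 1 ^ 2 - 2 * X 0 * X 2

/-- `f₃ = x₁x₄ - x₂(x₂² - 2x₁x₃ - 1)`. -/
noncomputable def winkF₃ : MvPolynomial (Fin 4) ℂ :=
  X 0 * X 3 - X 1 * (X 1 ^ 2 - 2 * X 0 * X 2 - 1)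

/-- Translating along the orbit by `λ` and then evaluating at `x` is evaluating at `λ · x`. -/
lemma eval_winkTau (l : ℂ) (x : Fin 4 → ℂ) (f : MvPolynomial (Fin 4) ℂ) :
    eval x (winkTau l f) =
      eval ![x 0, x 1 + l * x 0, x 2 + l * x 1 + (1 / 2) * l ^ 2 * x 0,
        x 3 + l * (x 1 ^ 2 - 2 * x 0 * x 2 - 1)] f := by
  induction f using MvPolynomial.induction_on with
  | C a => simp [winkTau]
  | add p q hp hq => simp only [map_add, hp, hq]
  | mul_X p i hp =>
    rw [map_mul, map_mul, hp, map_mul]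
    congr 1
    fin_cases i <;> simp [winkTau]

lemma winkTau_winkF₁ (l : ℂ) : winkTau l winkF₁ = winkF₁ := by
  simp [winkTau, winkF₁]

lemma winkTau_winkF₂ (l : ℂ) : winkTau l winkF₂ = winkF₂ := by
  refine MvPolynomial.funext fun x => ?_
  rw [eval_winkTau]
  simp [winkF₂]
  ring

lemma winkTau_winkF₃ (l : ℂ) : winkTau l winkF₃ = winkF₃ := by
  refine MvPolynomial.funext fun x => ?_
  rw [eval_winkTau]
  simp [winkF₃]
  ring

lemma winkF₁_ne_zero : winkF₁ ≠ 0 := X_ne_zero _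

/-- The fourth generator is determined by its defining relation. -/
lemma winkF₄_eq {f₄ : MvPolynomial (Fin 4) ℂ}
    (hf₄ : winkF₁ * f₄ = winkF₃ ^ 2 - winkF₂ * (1 - winkF₂) ^ 2) :
    f₄ = X 0 * X 3 ^ 2 - 2 * X 1 * X 3 * (winkF₂ - 1) + 2 * X 2 * (winkF₂ - 1) ^ 2 := by
  refine mul_left_cancel₀ winkF₁_ne_zero (hf₄.trans ?_)
  simp only [winkF₁, winkF₂, winkF₃]
  ring

lemma winkTau_winkF₄ {f₄ : MvPolynomial (Fin 4) ℂ}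
    (hf₄ : winkF₁ * f₄ = winkF₃ ^ 2 - winkF₂ * (1 - winkF₂) ^ 2) (l : ℂ) :
    winkTau l f₄ = f₄ := by
  refine mul_left_cancel₀ winkF₁_ne_zero ?_
  have h := congrArg (winkTau l) hf₄
  simp only [map_mul, map_sub, map_pow, map_one, winkTau_winkF₁, winkTau_winkF₂,
    winkTau_winkF₃] at h
  exact h.trans hf₄.symm

/-- The orbit of a point with `x₁ ≠ 0` meets the slice `x₂ = 0` in a point whose coordinates are,
up to powers of `x₁`, polynomials in `f₁, f₂, f₃`. -/
lemma exists_pow_mul_eval_slice_eq (A : Subalgebra ℂ (MvPolynomial (Fin 4) ℂ))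
    (h₁ : winkF₁ ∈ A) (h₂ : winkF₂ ∈ A) (h₃ : winkF₃ ∈ A) (p : MvPolynomial (Fin 4) ℂ) :
    ∃ N : ℕ, ∃ P ∈ A, ∀ x : Fin 4 → ℂ, x 0 ≠ 0 →
      x 0 ^ N * eval ![x 0, 0, -(eval x winkF₂) / (2 * x 0), eval x winkF₃ / x 0] p =
        eval x P := by
  have e₁ (x : Fin 4 → ℂ) : eval x winkF₁ = x 0 := by simp [winkF₁]
  induction p using MvPolynomial.induction_on with
  | C a => exact ⟨0, C a, A.algebraMap_mem a, fun x _ => by simp⟩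
  | add p q hp hq =>
    obtain ⟨M, P, hP, hp⟩ := hp
    obtain ⟨N, Q, hQ, hq⟩ := hq
    refine ⟨M + N, winkF₁ ^ N * P + winkF₁ ^ M * Q,
      A.add_mem (A.mul_mem (A.pow_mem h₁ _) hP) (A.mul_mem (A.pow_mem h₁ _) hQ), fun x hx => ?_⟩
    rw [map_add, map_add, map_mul, map_mul, map_pow, map_pow, e₁, ← hp x hx, ← hq x hx]
    ring
  | mul_X p i hp =>
    obtain ⟨N, P, hP, hp⟩ := hp
    suffices ∃ Q ∈ A, ∀ x : Fin 4 → ℂ, x 0 ≠ 0 →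
        x 0 * (![x 0, 0, -(eval x winkF₂) / (2 * x 0), eval x winkF₃ / x 0] : Fin 4 → ℂ) i =
          eval x Q by
      obtain ⟨Q, hQ, hq⟩ := this
      refine ⟨N + 1, P * Q, A.mul_mem hP hQ, fun x hx => ?_⟩
      rw [map_mul, map_mul, eval_X, ← hp x hx, ← hq x hx]
      ring
    fin_cases i
    · exact ⟨winkF₁ * winkF₁, A.mul_mem h₁ h₁, fun x _ => by simp [e₁]⟩
    · exact ⟨0, A.zero_mem, fun x _ => by simp⟩
    · refine ⟨C (-1 / 2) * winkF₂, A.mul_mem (A.algebraMap_mem _) h₂, fun x hx => ?_⟩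
      simp only [Fin.reduceFinMk, Matrix.cons_val, map_mul, eval_C]
      field_simp
    · refine ⟨winkF₃, h₃, fun x hx => ?_⟩
      simp only [Fin.reduceFinMk, Matrix.cons_val]
      field_simp

/-- After multiplication by a power of `f₁`, every invariant lies in any subalgebra containing
`f₁, f₂, f₃`. -/
lemma exists_pow_mul_mem_of_invariant (A : Subalgebra ℂ (MvPolynomial (Fin 4) ℂ))
    (h₁ : winkF₁ ∈ A) (h₂ : winkF₂ ∈ A) (h₃ : winkF₃ ∈ A) {f : MvPolynomial (Fin 4) ℂ}
    (hf : ∀ l : ℂ, winkTau l f = f) : ∃ N : ℕ, winkF₁ ^ N * f ∈ A := by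
  obtain ⟨N, P, hP, h⟩ := exists_pow_mul_eval_slice_eq A h₁ h₂ h₃ f
  refine ⟨N, ?_⟩
  suffices winkF₁ ^ N * f = P from this ▸ hP
  refine mul_left_cancel₀ winkF₁_ne_zero (MvPolynomial.funext fun x => ?_)
  by_cases hx : x 0 = 0
  · simp [winkF₁, hx]
  · rw [map_mul, map_mul, map_mul, ← h x hx]
    conv_lhs => rw [← hf (-x 1 / x 0), eval_winkTau]
    simp only [winkF₁, map_pow, eval_X]
    congr 4
    ext i
    fin_cases i <;> simp [winkF₂, winkF₃] <;> field_simp <;> ring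

/-- A polynomial in two variables vanishing wherever the first coordinate is a square `s ^ 2`
different from `0` and `1` is zero. -/
lemma eq_zero_of_eval_sq_eq_zero {p : MvPolynomial (Fin 2) ℂ}
    (h : ∀ s t : ℂ, s ≠ 0 → s ^ 2 ≠ 1 → eval ![s ^ 2, t] p = 0) : p = 0 := by
  have h₀ : (X 0 : MvPolynomial (Fin 2) ℂ) ≠ 0 := X_ne_zero _
  have h₁ : (X 0 - 1 : MvPolynomial (Fin 2) ℂ) ≠ 0 := fun h => by
    simpa using congrArg (eval 0) h
  refine mul_left_cancel₀ (mul_ne_zero h₀ h₁) (MvPolynomial.funext fun x => ?_)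
  obtain ⟨s, hs⟩ := IsAlgClosed.exists_pow_nat_eq (x 0) two_pos
  replace hs := hs.symm
  by_cases hs₀ : s = 0
  · simp [hs, hs₀]
  by_cases hs₁ : s ^ 2 = 1
  · simp [hs, hs₁]
  have hx : x = ![s ^ 2, x 1] := by
    ext i
    fin_cases i <;> simp [hs]
  rw [map_mul, mul_zero, map_zero, hx, h s _ hs₀ hs₁, mul_zero]

/-- Modulo `f₁`, the relation `f₁ f₄ = f₃² - f₂(1 - f₂)²` reduces every element of the generated
algebra to one of degree at most one in `f₃`. -/
lemma exists_normal_form_of_mem_adjoin {f₄ : MvPolynomial (Fin 4) ℂ}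
    (hf₄ : winkF₁ * f₄ = winkF₃ ^ 2 - winkF₂ * (1 - winkF₂) ^ 2) {g : MvPolynomial (Fin 4) ℂ}
    (hg : g ∈ Algebra.adjoin ℂ ({winkF₁, winkF₂, winkF₃, f₄} : Set (MvPolynomial (Fin 4) ℂ))) :
    ∃ a ∈ Algebra.adjoin ℂ ({winkF₁, winkF₂, winkF₃, f₄} : Set (MvPolynomial (Fin 4) ℂ)),
      ∃ p q : MvPolynomial (Fin 2) ℂ,
        g = winkF₁ * a + aeval ![winkF₂, f₄] p + winkF₃ * aeval ![winkF₂, f₄] q := by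
  set A := Algebra.adjoin ℂ ({winkF₁, winkF₂, winkF₃, f₄} : Set (MvPolynomial (Fin 4) ℂ))
  have h₁ : winkF₁ ∈ A := Algebra.subset_adjoin (by simp)
  have h₂ : winkF₂ ∈ A := Algebra.subset_adjoin (by simp)
  have h₃ : winkF₃ ∈ A := Algebra.subset_adjoin (by simp)
  have h₄ : f₄ ∈ A := Algebra.subset_adjoin (by simp)
  have hA (p : MvPolynomial (Fin 2) ℂ) : aeval ![winkF₂, f₄] p ∈ A := by
    induction p using MvPolynomial.induction_on with
    | C a => simpa using A.algebraMap_mem a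
    | add p q hp hq => simpa using A.add_mem hp hq
    | mul_X p i hp =>
      rw [map_mul, aeval_X]
      refine A.mul_mem hp ?_
      fin_cases i
      · exact h₂
      · exact h₄
  induction hg using Algebra.adjoin_induction with
  | mem x hx =>
    rcases hx with rfl | rfl | rfl | rfl
    · exact ⟨1, A.one_mem, 0, 0, by simp⟩
    · exact ⟨0, A.zero_mem, X 0, 0, by simp⟩
    · exact ⟨0, A.zero_mem, 0, 1, by simp⟩
    · exact ⟨0, A.zero_mem, X 1, 0, by simp⟩
  | algebraMap r => exact ⟨0, A.zero_mem, C r, 0, by simp⟩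
  | add x y _ _ hx hy =>
    obtain ⟨a, ha, p, q, rfl⟩ := hx
    obtain ⟨b, hb, r, s, rfl⟩ := hy
    refine ⟨a + b, A.add_mem ha hb, p + r, q + s, ?_⟩
    simp only [map_add]
    ring
  | mul x y _ hy' hx hy =>
    obtain ⟨a, ha, p, q, rfl⟩ := hx
    obtain ⟨b, hb, r, s, rfl⟩ := hy
    refine ⟨a * (winkF₁ * b + aeval ![winkF₂, f₄] r + winkF₃ * aeval ![winkF₂, f₄] s) +
      (aeval ![winkF₂, f₄] p + winkF₃ * aeval ![winkF₂, f₄] q) * b +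
      f₄ * (aeval ![winkF₂, f₄] q * aeval ![winkF₂, f₄] s),
      A.add_mem (A.add_mem (A.mul_mem ha hy')
        (A.mul_mem (A.add_mem (hA p) (A.mul_mem h₃ (hA q))) hb))
        (A.mul_mem h₄ (A.mul_mem (hA q) (hA s))),
      p * r + X 0 * (1 - X 0) ^ 2 * (q * s), p * s + q * r, ?_⟩
    simp only [map_add, map_mul, map_sub, map_pow, map_one, aeval_X, Matrix.cons_val_zero]
    linear_combination
      (-(aeval ![winkF₂, f₄] q * aeval ![winkF₂, f₄] s)) * hf₄

/-- The algebra generated by `f₁, f₂, f₃, f₄` is saturated with respect to `f₁`. -/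
lemma mem_adjoin_of_winkF₁_mul_mem {f₄ : MvPolynomial (Fin 4) ℂ}
    (hf₄ : winkF₁ * f₄ = winkF₃ ^ 2 - winkF₂ * (1 - winkF₂) ^ 2) {g : MvPolynomial (Fin 4) ℂ}
    (hg : winkF₁ * g ∈
      Algebra.adjoin ℂ ({winkF₁, winkF₂, winkF₃, f₄} : Set (MvPolynomial (Fin 4) ℂ))) :
    g ∈ Algebra.adjoin ℂ ({winkF₁, winkF₂, winkF₃, f₄} : Set (MvPolynomial (Fin 4) ℂ)) := by
  obtain ⟨a, ha, p, q, h⟩ := exists_normal_form_of_mem_adjoin hf₄ hg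
  have eval_aeval (x : Fin 4 → ℂ) (r : MvPolynomial (Fin 2) ℂ) :
      eval x (aeval ![winkF₂, f₄] r) = eval ![eval x winkF₂, eval x f₄] r := by
    induction r using MvPolynomial.induction_on with
    | C a => simp
    | add r s hr hs => simp only [map_add, hr, hs]
    | mul_X r i hr =>
      rw [map_mul, map_mul, hr, map_mul]
      congr 1
      fin_cases i <;> simp
  have key (s t : ℂ) (hs : s ^ 2 ≠ 1) :
      eval ![s ^ 2, t] p - s * (s ^ 2 - 1) * eval ![s ^ 2, t] q = 0 := by
    have hs' : s ^ 2 - 1 ≠ 0 := sub_ne_zero.2 hs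
    have h' := congrArg (eval ![0, s, t / (2 * (s ^ 2 - 1) ^ 2), 0]) h
    have e₂ : eval ![0, s, t / (2 * (s ^ 2 - 1) ^ 2), 0] winkF₂ = s ^ 2 := by simp [winkF₂]
    have e₃ : eval ![0, s, t / (2 * (s ^ 2 - 1) ^ 2), 0] winkF₃ = -(s * (s ^ 2 - 1)) := by
      simp [winkF₃]
    have e₄ : eval ![0, s, t / (2 * (s ^ 2 - 1) ^ 2), 0] f₄ = t := by
      rw [winkF₄_eq hf₄]
      simp only [map_add, map_sub, map_mul, map_pow, map_one, map_ofNat, eval_X, e₂,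
        Matrix.cons_val]
      field_simp
      ring
    simp only [map_add, map_mul, eval_aeval, e₂, e₃, e₄] at h'
    simp only [winkF₁, eval_X, Matrix.cons_val_zero] at h'
    linear_combination -h'
  have hp : p = 0 := eq_zero_of_eval_sq_eq_zero fun s t _ hs => by
    have h₁ := key s t hs
    have h₂ := key (-s) t (by rwa [neg_sq])
    rw [neg_sq] at h₂
    linear_combination (h₁ + h₂) / 2
  have hq : q = 0 := eq_zero_of_eval_sq_eq_zero fun s t hs₀ hs => by
    have h₁ := key s t hs
    rw [hp, map_zero, zero_sub, neg_eq_zero] at h₁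
    exact (mul_eq_zero.1 h₁).resolve_left (mul_ne_zero hs₀ (sub_ne_zero.2 hs))
  rw [hp, hq, map_zero, mul_zero, add_zero, add_zero] at h
  exact mul_left_cancel₀ winkF₁_ne_zero h ▸ ha

/-- **The invariant algebra of Winkelmann's action is generated by `f₁, f₂, f₃, f₄`:**
a polynomial `f` is fixed by all `τ_λ` iff it lies in the `ℂ`-subalgebra generated by
`f₁, f₂, f₃` and the polynomial `f₄` with `f₁ f₄ = f₃² - f₂(1 - f₂)²`. -/
theorem winkelmann_invariant_algebra_eq_adjoin
    (f₄ : MvPolynomial (Fin 4) ℂ)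
    (hf₄ : winkF₁ * f₄ = winkF₃ ^ 2 - winkF₂ * (1 - winkF₂) ^ 2)
    (f : MvPolynomial (Fin 4) ℂ) :
    (∀ l : ℂ, winkTau l f = f) ↔
      f ∈ Algebra.adjoin ℂ
        ({winkF₁, winkF₂, winkF₃, f₄} : Set (MvPolynomial (Fin 4) ℂ)) := by
  constructor
  · intro hf
    obtain ⟨N, hN⟩ := exists_pow_mul_mem_of_invariant
      (Algebra.adjoin ℂ ({winkF₁, winkF₂, winkF₃, f₄} : Set (MvPolynomial (Fin 4) ℂ)))
      (Algebra.subset_adjoin (by simp)) (Algebra.subset_adjoin (by simp))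
      (Algebra.subset_adjoin (by simp)) hf
    induction N with
    | zero => simpa using hN
    | succ N ih =>
      refine ih (mem_adjoin_of_winkF₁_mul_mem hf₄ ?_)
      rwa [← mul_assoc, ← pow_succ']
  · intro hf l
    suffices Algebra.adjoin ℂ ({winkF₁, winkF₂, winkF₃, f₄} : Set (MvPolynomial (Fin 4) ℂ)) ≤
        AlgHom.equalizer (winkTau l) (AlgHom.id ℂ _) from this hf
    refine Algebra.adjoin_le ?_
    rintro x (rfl | rfl | rfl | rfl)
    · exact winkTau_winkF₁ l
    · exact winkTau_winkF₂ l
    · exact winkTau_winkF₃ l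
    · exact winkTau_winkF₄ hf₄ l
end

section
/- Fix an integer m ≥ 2. For λ ∈ ℂ let ρ_λ be the ℂ-algebra automorphism of ℂ[x,y,z,s,t,u,v] determined by ρ_λ(x) = x, ρ_λ(y) = y, ρ_λ(z) = z, ρ_λ(s) = s + λx^{m+1}, ρ_λ(t) = t + λy^{m+1}, ρ_λ(u) = u + λz^{m+1}, ρ_λ(v) = v + λx^m y^m z^m. Then the invariant algebra {f ∈ ℂ[x,y,z,s,t,u,v] : ρ_λ(f) = f for all λ ∈ ℂ} is not finitely generated as a ℂ-algebra. -/
open MvPolynomial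

/-- The comorphism `ρ_λ` of the additive group action on `ℂ⁷` (Roberts/Section 4):
`x ↦ x`, `y ↦ y`, `z ↦ z`, `s ↦ s + λx^{m+1}`, `t ↦ t + λy^{m+1}`,
`u ↦ u + λz^{m+1}`, `v ↦ v + λx^m y^m z^m`
(variables `X 0 = x`, `X 1 = y`, `X 2 = z`, `X 3 = s`, `X 4 = t`, `X 5 = u`, `X 6 = v`). -/
noncomputable def robertsRho (m : ℕ) (l : ℂ) :
    MvPolynomial (Fin 7) ℂ →ₐ[ℂ] MvPolynomial (Fin 7) ℂ :=
  aeval ![X 0, X 1, X 2,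
          X 3 + C l * X 0 ^ (m + 1),
          X 4 + C l * X 1 ^ (m + 1),
          X 5 + C l * X 2 ^ (m + 1),
          X 6 + C l * X 0 ^ m * X 1 ^ m * X 2 ^ m]

/-- The locally nilpotent derivation generating the action `robertsRho m`. -/
noncomputable def robertsDerivation (m : ℕ) :
    Derivation ℂ (MvPolynomial (Fin 7) ℂ) (MvPolynomial (Fin 7) ℂ) :=
  mkDerivation ℂ ![0, 0, 0, X 0 ^ (m + 1), X 1 ^ (m + 1), X 2 ^ (m + 1),
    X 0 ^ m * X 1 ^ m * X 2 ^ m]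

theorem robertsDerivation_eq_pderiv (m : ℕ) (f : MvPolynomial (Fin 7) ℂ) :
    robertsDerivation m f = X 0 ^ (m + 1) * pderiv 3 f + X 1 ^ (m + 1) * pderiv 4 f +
      X 2 ^ (m + 1) * pderiv 5 f + X 0 ^ m * X 1 ^ m * X 2 ^ m * pderiv 6 f := by
  have h : robertsDerivation m = (X 0 ^ (m + 1) : MvPolynomial (Fin 7) ℂ) • pderiv 3 +
      (X 1 ^ (m + 1) : MvPolynomial (Fin 7) ℂ) • pderiv 4 +
      (X 2 ^ (m + 1) : MvPolynomial (Fin 7) ℂ) • pderiv 5 +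
      (X 0 ^ m * X 1 ^ m * X 2 ^ m : MvPolynomial (Fin 7) ℂ) • pderiv 6 := by
    apply derivation_ext
    intro i
    fin_cases i <;> simp [robertsDerivation, mkDerivation_X, pderiv_X]
  rw [h]
  rfl

/-- The action `robertsRho m` with the group parameter replaced by an indeterminate. -/
noncomputable def robertsFlow (m : ℕ) :
    MvPolynomial (Fin 7) ℂ →ₐ[ℂ] Polynomial (MvPolynomial (Fin 7) ℂ) :=
  aeval fun i => Polynomial.C (X i) + Polynomial.X * Polynomial.C (robertsDerivation m (X i))

theorem eval_robertsFlow (m : ℕ) (l : ℂ) (f : MvPolynomial (Fin 7) ℂ) :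
    (robertsFlow m f).eval (C l) = robertsRho m l f := by
  induction f using MvPolynomial.induction_on with
  | C a => simp [robertsFlow, robertsRho, ← algebraMap_eq, Polynomial.algebraMap_apply]
  | add p q hp hq => simp [hp, hq]
  | mul_X p i hp =>
    rw [map_mul, map_mul, Polynomial.eval_mul, hp]
    congr 1
    fin_cases i <;> simp [robertsFlow, robertsRho, robertsDerivation, mkDerivation_X] <;> ring

theorem derivative_robertsFlow (m : ℕ) (f : MvPolynomial (Fin 7) ℂ) :
    Polynomial.derivative (robertsFlow m f) = robertsFlow m (robertsDerivation m f) := by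
  induction f using MvPolynomial.induction_on with
  | C a => simp [robertsFlow, ← algebraMap_eq, Polynomial.algebraMap_apply]
  | add p q hp hq => simp [hp, hq]
  | mul_X p i hp =>
    have hX : Polynomial.derivative (robertsFlow m (X i)) =
        robertsFlow m (robertsDerivation m (X i)) := by
      fin_cases i <;>
        simp [robertsFlow, robertsDerivation, mkDerivation_X, Polynomial.derivative_pow]
    rw [map_mul, Polynomial.derivative_mul, hp, hX, Derivation.leibniz, map_add, smul_eq_mul,
      smul_eq_mul, map_mul, map_mul]
    ring

theorem robertsRho_zero (m : ℕ) (f : MvPolynomial (Fin 7) ℂ) : robertsRho m 0 f = f := by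
  have h : robertsRho m 0 = AlgHom.id ℂ _ := by
    apply MvPolynomial.algHom_ext
    intro i
    fin_cases i <;> simp [robertsRho]
  rw [h]
  rfl

theorem robertsRho_invariant_iff (m : ℕ) (f : MvPolynomial (Fin 7) ℂ) :
    (∀ l : ℂ, robertsRho m l f = f) ↔ robertsDerivation m f = 0 := by
  constructor
  · intro h
    have hflow : robertsFlow m f = Polynomial.C f := by
      apply Polynomial.eq_of_infinite_eval_eq
      refine (Set.infinite_range_of_injective (C_injective (Fin 7) ℂ)).mono ?_
      rintro _ ⟨l, rfl⟩
      simp [eval_robertsFlow, h]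
    have hD := derivative_robertsFlow m f
    rw [hflow, Polynomial.derivative_C] at hD
    rw [← robertsRho_zero m (robertsDerivation m f), ← eval_robertsFlow, ← hD,
      Polynomial.eval_zero]
  · intro h l
    have hD := derivative_robertsFlow m f
    rw [h, map_zero] at hD
    have hC := Polynomial.eq_C_of_natDegree_eq_zero
      (Polynomial.derivative_eq_zero.mp hD)
    rw [← eval_robertsFlow, hC, Polynomial.eval_C]
    conv_rhs => rw [← robertsRho_zero m f, ← eval_robertsFlow, hC, Polynomial.eval_C]

/-- Restriction of a polynomial to the plane `y = z = s = t = u = 0`, viewed as a polynomial in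
`x` with coefficients in `ℂ[v]`. -/
noncomputable def restrictXV :
    MvPolynomial (Fin 7) ℂ →ₐ[ℂ] Polynomial (Polynomial ℂ) :=
  aeval ![Polynomial.X, 0, 0, 0, 0, 0, Polynomial.C Polynomial.X]

theorem coeff_restrictXV (f : MvPolynomial (Fin 7) ℂ) (n : ℕ) :
    ((restrictXV f).coeff 0).coeff n = f.coeff (Finsupp.single 6 n) := by
  induction f using MvPolynomial.induction_on' with
  | add p q hp hq => simp [hp, hq]
  | monomial a c =>
    rw [restrictXV, aeval_monomial, Finsupp.prod_fintype _ _ (by simp), Fin.prod_univ_seven,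
      coeff_monomial]
    by_cases h : ∃ k, a = Finsupp.single 6 k
    · obtain ⟨k, rfl⟩ := h
      simp [-map_pow, Polynomial.algebraMap_apply, ← Polynomial.C_pow, Polynomial.coeff_X_pow,
        (Finsupp.single_injective (6 : Fin 7)).eq_iff, eq_comm]
    · have hne : ∃ i : Fin 7, i ≠ 6 ∧ a i ≠ 0 := by
        by_contra! hc
        refine h ⟨a 6, ?_⟩
        ext i
        by_cases hi : i = 6
        · simp [hi]
        · simp [hc i hi, Ne.symm hi]
      rw [if_neg fun ha => h ⟨n, ha⟩]
      obtain ⟨i, hi, hai⟩ := hne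
      have hai' := hai.symm
      fin_cases i <;> simp_all [Polynomial.mul_coeff_zero, Polynomial.coeff_X_pow]

theorem coeff_restrictXV_eq_zero {m : ℕ} {f : MvPolynomial (Fin 7) ℂ}
    (hf : robertsDerivation m f = 0) {n : ℕ} (hn : n ≠ 0) :
    ((restrictXV f).coeff 0).coeff n = 0 := by
  obtain ⟨k, rfl⟩ := Nat.exists_eq_succ_of_ne_zero hn
  rw [coeff_restrictXV]
  rw [robertsDerivation_eq_pderiv] at hf
  have h := congrArg (coeff (Finsupp.single 0 m + Finsupp.single 1 m + Finsupp.single 2 m +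
    Finsupp.single 6 k)) hf
  have hw : (X 0 ^ m * X 1 ^ m * X 2 ^ m : MvPolynomial (Fin 7) ℂ) =
      monomial (Finsupp.single 0 m + Finsupp.single 1 m + Finsupp.single 2 m) 1 := by
    simp [X_pow_eq_monomial, monomial_mul]
  have hlt (i : Fin 7) (hi : i = 0 ∨ i = 1 ∨ i = 2) : ¬ Finsupp.single i (m + 1) ≤
      (Finsupp.single 0 m + Finsupp.single 1 m + Finsupp.single 2 m +
    Finsupp.single 6 k : Fin 7 →₀ ℕ) := by
    intro h
    have := h i
    rcases hi with rfl | rfl | rfl <;> simp at this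
  rw [hw] at h
  simp only [coeff_add, X_pow_eq_monomial, coeff_monomial_mul, coeff_pderiv] at h
  rw [coeff_monomial_mul', coeff_monomial_mul', coeff_monomial_mul', if_neg (hlt _ (by simp)),
    if_neg (hlt _ (by simp)), if_neg (hlt _ (by simp))] at h
  simp [← Finsupp.single_add] at h
  rcases h with h | h
  · exact h
  · exact absurd h (by exact_mod_cast Nat.succ_ne_zero k)

/-- A ladder argument as for representations of `sl₂`: if `E` lowers and `R` raises the grading and
`E R - R E` is the scalar `N - 2 e` in degree `e`, then `R E + a` is surjective in degree `e` for
positive `a`. -/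
theorem exists_raise_lower_add_smul {V : Type*} [AddCommGroup V] [Module ℂ V]
    (W : ℕ → Submodule ℂ V) (E R : V →ₗ[ℂ] V) (N : ℕ)
    (hE : ∀ e, ∀ x ∈ W (e + 1), E x ∈ W e) (hE₀ : ∀ x ∈ W 0, E x = 0)
    (hR : ∀ e, ∀ x ∈ W e, R x ∈ W (e + 1))
    (hER : ∀ e, ∀ x ∈ W e, E (R x) = R (E x) + ((N : ℂ) - 2 * e) • x)
    (e : ℕ) (he : 2 * e < N + 2) (a : ℕ) (ha : 0 < a) (g : V) (hg : g ∈ W e) :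
    ∃ x ∈ W e, R (E x) + (a : ℂ) • x = g := by
  have ha' : (a : ℂ) ≠ 0 := by exact_mod_cast ha.ne'
  induction e generalizing a g with
  | zero =>
    refine ⟨(a : ℂ)⁻¹ • g, (W 0).smul_mem _ hg, ?_⟩
    rw [map_smul, hE₀ g hg]
    simp [ha']
  | succ e ih =>
    obtain ⟨y, hy, hyg⟩ := ih (by omega) (N - 2 * e + a) (by omega) (E g) (hE e g hg)
      (by norm_cast; omega)
    have hcast : ((N - 2 * e + a : ℕ) : ℂ) = (N : ℂ) - 2 * e + a := by
      push_cast [show 2 * e ≤ N by omega]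
      ring
    have hy' : E (R y) + (a : ℂ) • y = E g := by
      rw [hER e y hy, ← hyg, hcast]
      module
    refine ⟨(a : ℂ)⁻¹ • (g - R y), (W _).smul_mem _ ((W _).sub_mem hg (hR e y hy)), ?_⟩
    rw [map_smul, map_sub, ← hy', map_smul, add_sub_cancel_left, map_smul, smul_smul, smul_smul,
      inv_mul_cancel₀ ha', mul_inv_cancel₀ ha', one_smul, one_smul, add_sub_cancel]

theorem exists_lower_eq {V : Type*} [AddCommGroup V] [Module ℂ V]
    (W : ℕ → Submodule ℂ V) (E R : V →ₗ[ℂ] V) (N : ℕ)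
    (hE : ∀ e, ∀ x ∈ W (e + 1), E x ∈ W e) (hE₀ : ∀ x ∈ W 0, E x = 0)
    (hR : ∀ e, ∀ x ∈ W e, R x ∈ W (e + 1))
    (hER : ∀ e, ∀ x ∈ W e, E (R x) = R (E x) + ((N : ℂ) - 2 * e) • x)
    (e : ℕ) (he : 2 * e < N) (g : V) (hg : g ∈ W e) :
    ∃ x ∈ W (e + 1), E x = g := by
  obtain ⟨x, hx, hxg⟩ := exists_raise_lower_add_smul W E R N hE hE₀ hR hER e (by omega)
    (N - 2 * e) (by omega) g hg
  refine ⟨R x, hR e x hx, ?_⟩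
  rw [hER e x hx, ← hxg]
  push_cast [he.le]
  rfl

/-- The operator `∂_s + ∂_t + ∂_u` on `ℂ[s, t, u]`, written in the basis of monomials. -/
noncomputable def lowerOp : (ℕ × ℕ × ℕ →₀ ℂ) →ₗ[ℂ] (ℕ × ℕ × ℕ →₀ ℂ) :=
  Finsupp.linearCombination ℂ fun a =>
    (a.1 : ℂ) • Finsupp.single (a.1 - 1, a.2.1, a.2.2) 1 +
    (a.2.1 : ℂ) • Finsupp.single (a.1, a.2.1 - 1, a.2.2) 1 +
    (a.2.2 : ℂ) • Finsupp.single (a.1, a.2.1, a.2.2 - 1) 1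

/-- The raising operator adjoint to `lowerOp` on monomials with exponents at most `p, q, r`. -/
noncomputable def raiseOp (p q r : ℕ) : (ℕ × ℕ × ℕ →₀ ℂ) →ₗ[ℂ] (ℕ × ℕ × ℕ →₀ ℂ) :=
  Finsupp.linearCombination ℂ fun a =>
    ((p : ℂ) - a.1) • Finsupp.single (a.1 + 1, a.2.1, a.2.2) 1 +
    ((q : ℂ) - a.2.1) • Finsupp.single (a.1, a.2.1 + 1, a.2.2) 1 +
    ((r : ℂ) - a.2.2) • Finsupp.single (a.1, a.2.1, a.2.2 + 1) 1

/-- Polynomials in `s, t, u`, homogeneous of degree `e`, with exponents at most `p, q, r`. -/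
noncomputable def boxSpan (p q r e : ℕ) : Submodule ℂ (ℕ × ℕ × ℕ →₀ ℂ) :=
  Submodule.span ℂ ((fun a => Finsupp.single a 1) ''
    {a | a.1 ≤ p ∧ a.2.1 ≤ q ∧ a.2.2 ≤ r ∧ a.1 + a.2.1 + a.2.2 = e})

theorem boxSpan_mono {p q r p' q' r' : ℕ} (hp : p ≤ p') (hq : q ≤ q') (hr : r ≤ r') (e : ℕ) :
    boxSpan p q r e ≤ boxSpan p' q' r' e := by
  apply Submodule.span_mono
  apply Set.image_mono
  rintro a ⟨h₁, h₂, h₃, h₄⟩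
  exact ⟨h₁.trans hp, h₂.trans hq, h₃.trans hr, h₄⟩

theorem single_mem_boxSpan {p q r e j k l : ℕ} (hj : j ≤ p) (hk : k ≤ q) (hl : l ≤ r)
    (he : j + k + l = e) : Finsupp.single (j, k, l) (1 : ℂ) ∈ boxSpan p q r e :=
  Submodule.subset_span ⟨(j, k, l), ⟨hj, hk, hl, he⟩, rfl⟩

/-- A linear condition on `boxSpan p q r e` may be checked on monomials. -/
theorem boxSpan_induction {V : Type*} [AddCommGroup V] [Module ℂ V] {p q r e : ℕ}
    (f : (ℕ × ℕ × ℕ →₀ ℂ) →ₗ[ℂ] V) (W : Submodule ℂ V)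
    (h : ∀ j k l, j ≤ p → k ≤ q → l ≤ r → j + k + l = e → f (Finsupp.single (j, k, l) 1) ∈ W)
    {x : ℕ × ℕ × ℕ →₀ ℂ} (hx : x ∈ boxSpan p q r e) : f x ∈ W := by
  suffices boxSpan p q r e ≤ W.comap f from this hx
  rw [boxSpan, Submodule.span_le]
  rintro _ ⟨⟨j, k, l⟩, ⟨hj, hk, hl, he⟩, rfl⟩
  exact h j k l hj hk hl he

theorem smul_single_mem {p q r e j k l : ℕ} {c : ℂ}
    (h : c ≠ 0 → j ≤ p ∧ k ≤ q ∧ l ≤ r ∧ j + k + l = e) :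
    c • Finsupp.single (j, k, l) (1 : ℂ) ∈ boxSpan p q r e := by
  by_cases hc : c = 0
  · simp [hc]
  · obtain ⟨hj, hk, hl, he⟩ := h hc
    exact Submodule.smul_mem _ _ (single_mem_boxSpan hj hk hl he)

theorem lowerOp_mem {p q r e : ℕ} {x : ℕ × ℕ × ℕ →₀ ℂ} (hx : x ∈ boxSpan p q r (e + 1)) :
    lowerOp x ∈ boxSpan p q r e := by
  refine boxSpan_induction lowerOp _ (fun j k l hj hk hl he => ?_) hx
  simp only [lowerOp, Finsupp.linearCombination_single, one_smul]
  refine add_mem (add_mem ?_ ?_) ?_ <;>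
  · refine smul_single_mem fun hc => ?_
    have := Nat.cast_ne_zero.mp hc
    omega

theorem lowerOp_eq_zero {p q r : ℕ} {x : ℕ × ℕ × ℕ →₀ ℂ} (hx : x ∈ boxSpan p q r 0) :
    lowerOp x = 0 := by
  rw [← Submodule.mem_bot ℂ]
  refine boxSpan_induction lowerOp _ (fun j k l hj hk hl he => ?_) hx
  obtain ⟨⟨rfl, rfl⟩, rfl⟩ : (j = 0 ∧ k = 0) ∧ l = 0 := by omega
  simp [lowerOp]

theorem raiseOp_mem {p q r e : ℕ} {x : ℕ × ℕ × ℕ →₀ ℂ} (hx : x ∈ boxSpan p q r e) :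
    raiseOp p q r x ∈ boxSpan p q r (e + 1) := by
  refine boxSpan_induction (raiseOp p q r) _ (fun j k l hj hk hl he => ?_) hx
  simp only [raiseOp, Finsupp.linearCombination_single, one_smul]
  refine add_mem (add_mem ?_ ?_) ?_ <;>
  · refine smul_single_mem fun hc => ?_
    rw [sub_ne_zero, Ne, Nat.cast_inj] at hc
    omega

theorem lowerOp_raiseOp {p q r e : ℕ} {x : ℕ × ℕ × ℕ →₀ ℂ} (hx : x ∈ boxSpan p q r e) :
    lowerOp (raiseOp p q r x) =
      raiseOp p q r (lowerOp x) + (((p + q + r : ℕ) : ℂ) - 2 * e) • x := by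
  rw [← sub_eq_zero, ← Submodule.mem_bot ℂ]
  refine boxSpan_induction (lowerOp ∘ₗ raiseOp p q r - (raiseOp p q r ∘ₗ lowerOp +
    (((p + q + r : ℕ) : ℂ) - 2 * e) • LinearMap.id)) _ (fun j k l hj hk hl he => ?_) hx
  rw [Submodule.mem_bot, LinearMap.sub_apply, sub_eq_zero]
  subst he
  simp only [LinearMap.comp_apply, LinearMap.add_apply, LinearMap.smul_apply, LinearMap.id_apply,
    lowerOp, raiseOp, Finsupp.linearCombination_single, one_smul, map_add, map_smul]
  rcases j with _ | j <;> rcases k with _ | k <;> rcases l with _ | l <;>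
  · simp only [Nat.add_sub_cancel, Nat.cast_zero, zero_smul]
    push_cast
    module

theorem exists_lowerOp_eq {p q r e : ℕ} (he : 2 * e < p + q + r) {g : ℕ × ℕ × ℕ →₀ ℂ}
    (hg : g ∈ boxSpan p q r e) : ∃ x ∈ boxSpan p q r (e + 1), lowerOp x = g :=
  exists_lower_eq (boxSpan p q r) lowerOp (raiseOp p q r) (p + q + r) (fun _ _ => lowerOp_mem)
    (fun _ => lowerOp_eq_zero) (fun _ _ => raiseOp_mem) (fun _ _ => lowerOp_raiseOp) e he g hg

/-- A sequence of successive preimages under `E`, built by dependent choice. -/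
theorem exists_preimage_sequence {V : Type*} [AddCommGroup V] [Module ℂ V]
    (W : ℕ → Submodule ℂ V) (E : V →ₗ[ℂ] V) {g : V} (hg : g ∈ W 0)
    (step : ∀ i, ∀ x ∈ W i, ∃ y ∈ W (i + 1), E y = x) :
    ∃ b : ℕ → V, b 0 = g ∧ (∀ i, b i ∈ W i) ∧ ∀ i, E (b (i + 1)) = b i := by
  choose! next hmem hnext using step
  let b (i : ℕ) : V := Nat.rec g next i
  have hb (i : ℕ) : b i ∈ W i := by
    induction i with
    | zero => exact hg
    | succ i ih => exact hmem i _ ih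
  exact ⟨b, rfl, hb, fun i => hnext i _ (hb i)⟩

theorem exists_lowerOp_sequence : ∃ b : ℕ → (ℕ × ℕ × ℕ →₀ ℂ), b 0 = Finsupp.single (0, 0, 0) 1 ∧
    (∀ i, b i ∈ boxSpan ((2 * i + 1) / 3) (2 * i / 3) (2 * i / 3) i) ∧
    ∀ i, lowerOp (b (i + 1)) = b i :=
  exists_preimage_sequence (fun i => boxSpan ((2 * i + 1) / 3) (2 * i / 3) (2 * i / 3) i) lowerOp
    (single_mem_boxSpan (Nat.zero_le _) (Nat.zero_le _) (Nat.zero_le _) (by simp))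
    fun i _ hx => exists_lowerOp_eq (by omega)
      (boxSpan_mono (by omega) (by omega) (by omega) i hx)

/-- The monomial map `s^j t^k u^l ↦ x^{a-(m+1)j} y^{b-(m+1)k} z^{c-(m+1)l} s^j t^k u^l`. -/
noncomputable def homogenizeSTU (m a b c : ℕ) :
    (ℕ × ℕ × ℕ →₀ ℂ) →ₗ[ℂ] MvPolynomial (Fin 7) ℂ :=
  Finsupp.linearCombination ℂ fun d =>
    X 0 ^ (a - (m + 1) * d.1) * X 1 ^ (b - (m + 1) * d.2.1) * X 2 ^ (c - (m + 1) * d.2.2) *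
      (X 3 ^ d.1 * X 4 ^ d.2.1 * X 5 ^ d.2.2)

theorem robertsDerivation_homogenizeSTU_single (m A B K j k l : ℕ) :
    robertsDerivation m (homogenizeSTU m (A + (m + 1) * j) (B + (m + 1) * k) (K + (m + 1) * l)
      (Finsupp.single (j, k, l) 1)) =
    homogenizeSTU m (A + (m + 1) * j) (B + (m + 1) * k) (K + (m + 1) * l)
      (lowerOp (Finsupp.single (j, k, l) 1)) := by
  have hsucc (A j : ℕ) : A + (m + 1) * (j + 1) - (m + 1) * j = A + (m + 1) := by
    rw [mul_add, ← add_assoc, mul_one]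
    omega
  have hD (i : Fin 7) : robertsDerivation m (X i) = ![0, 0, 0, X 0 ^ (m + 1), X 1 ^ (m + 1),
    X 2 ^ (m + 1), X 0 ^ m * X 1 ^ m * X 2 ^ m] i := mkDerivation_X _ _ _
  simp only [homogenizeSTU, lowerOp, Finsupp.linearCombination_single, one_smul, map_add, map_smul,
    Derivation.leibniz, Derivation.leibniz_pow, hD]
  rcases j with _ | j <;> rcases k with _ | k <;> rcases l with _ | l <;>
  · simp [hsucc, smul_eq_C_mul]
    try ring

theorem mul_le_of_box {m i j k l : ℕ} (hm : 2 ≤ m) (hj : j ≤ (2 * i + 1) / 3) (hk : k ≤ 2 * i / 3)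
    (hl : l ≤ 2 * i / 3) (hi : j + k + l = i) :
    (m + 1) * j ≤ i * m + 1 ∧ (m + 1) * k ≤ i * m ∧ (m + 1) * l ≤ i * m := by
  obtain ⟨m, rfl⟩ := Nat.exists_eq_add_of_le hm
  refine ⟨?_, ?_, ?_⟩
  · nlinarith [Nat.mul_le_mul_left m (show j ≤ i by omega), show 3 * j ≤ 2 * i + 1 by omega]
  · nlinarith [Nat.mul_le_mul_left m (show k ≤ i by omega), show 3 * k ≤ 2 * i by omega]
  · nlinarith [Nat.mul_le_mul_left m (show l ≤ i by omega), show 3 * l ≤ 2 * i by omega]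

theorem robertsDerivation_homogenizeSTU {m i : ℕ} (hm : 2 ≤ m) {x : ℕ × ℕ × ℕ →₀ ℂ}
    (hx : x ∈ boxSpan ((2 * i + 1) / 3) (2 * i / 3) (2 * i / 3) i) :
    robertsDerivation m (homogenizeSTU m (i * m + 1) (i * m) (i * m) x) =
      homogenizeSTU m (i * m + 1) (i * m) (i * m) (lowerOp x) := by
  rw [← sub_eq_zero, ← Submodule.mem_bot ℂ]
  refine boxSpan_induction
    ((robertsDerivation m).toLinearMap ∘ₗ homogenizeSTU m (i * m + 1) (i * m) (i * m) -
      homogenizeSTU m (i * m + 1) (i * m) (i * m) ∘ₗ lowerOp) _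
    (fun j k l hj hk hl he => ?_) hx
  obtain ⟨h₁, h₂, h₃⟩ := mul_le_of_box hm hj hk hl he
  have h := robertsDerivation_homogenizeSTU_single m (i * m + 1 - (m + 1) * j)
    (i * m - (m + 1) * k) (i * m - (m + 1) * l) j k l
  rw [Nat.sub_add_cancel h₁, Nat.sub_add_cancel h₂, Nat.sub_add_cancel h₃] at h
  rw [Submodule.mem_bot, LinearMap.sub_apply, sub_eq_zero]
  exact h

theorem homogenizeSTU_succ {m i : ℕ} (hm : 2 ≤ m) {x : ℕ × ℕ × ℕ →₀ ℂ}
    (hx : x ∈ boxSpan ((2 * i + 1) / 3) (2 * i / 3) (2 * i / 3) i) :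
    homogenizeSTU m ((i + 1) * m + 1) ((i + 1) * m) ((i + 1) * m) x =
      X 0 ^ m * X 1 ^ m * X 2 ^ m * homogenizeSTU m (i * m + 1) (i * m) (i * m) x := by
  rw [← sub_eq_zero, ← Submodule.mem_bot ℂ]
  refine boxSpan_induction (homogenizeSTU m ((i + 1) * m + 1) ((i + 1) * m) ((i + 1) * m) -
      LinearMap.mulLeft ℂ (X 0 ^ m * X 1 ^ m * X 2 ^ m) ∘ₗ
        homogenizeSTU m (i * m + 1) (i * m) (i * m)) _
    (fun j k l hj hk hl he => ?_) hx
  obtain ⟨h₁, h₂, h₃⟩ := mul_le_of_box hm hj hk hl he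
  rw [Submodule.mem_bot, LinearMap.sub_apply, sub_eq_zero, LinearMap.comp_apply,
    LinearMap.mulLeft_apply]
  simp only [homogenizeSTU, Finsupp.linearCombination_single, one_smul]
  rw [show (i + 1) * m + 1 - (m + 1) * j = m + (i * m + 1 - (m + 1) * j) by rw [add_mul]; omega,
    show (i + 1) * m - (m + 1) * k = m + (i * m - (m + 1) * k) by rw [add_mul]; omega,
    show (i + 1) * m - (m + 1) * l = m + (i * m - (m + 1) * l) by rw [add_mul]; omega]
  ring

theorem restrictXV_homogenizeSTU {p q r i : ℕ} (m a b c : ℕ) (hi : i ≠ 0) {x : ℕ × ℕ × ℕ →₀ ℂ}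
    (hx : x ∈ boxSpan p q r i) : restrictXV (homogenizeSTU m a b c x) = 0 := by
  rw [← Submodule.mem_bot ℂ]
  refine boxSpan_induction (restrictXV.toLinearMap ∘ₗ homogenizeSTU m a b c) _
    (fun j k l hj hk hl he => ?_) hx
  have hne : j ≠ 0 ∨ k ≠ 0 ∨ l ≠ 0 := by omega
  simp only [LinearMap.comp_apply, homogenizeSTU, Finsupp.linearCombination_single, one_smul,
    Submodule.mem_bot, AlgHom.toLinearMap_apply]
  rcases hne with h | h | h <;> simp [restrictXV, h]

/-- A chain `h` with `D (h (i + 1)) = D v * h i` yields a constant of the derivation `D` with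
leading term `h 0 * v ^ n`. -/
theorem robertsDerivation_sum_range (m n : ℕ) {h : ℕ → MvPolynomial (Fin 7) ℂ}
    (h₀ : robertsDerivation m (h 0) = 0)
    (hsucc : ∀ i, robertsDerivation m (h (i + 1)) = robertsDerivation m (X 6) * h i) (N : ℕ) :
    robertsDerivation m (∑ i ∈ Finset.range (N + 1),
      C ((-1) ^ i * (n.descFactorial i : ℂ)) * X 6 ^ (n - i) * h i) =
    C ((-1) ^ N * (n.descFactorial (N + 1) : ℂ)) * X 6 ^ (n - (N + 1)) *
      (robertsDerivation m (X 6) * h N) := by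
  induction N with
  | zero =>
    simp [Derivation.leibniz, Derivation.leibniz_pow, h₀]
    ring
  | succ N ih =>
    rw [Finset.sum_range_succ, map_add, ih]
    simp only [Derivation.leibniz, Derivation.leibniz_pow, hsucc, derivation_C, smul_eq_mul,
      nsmul_eq_mul, Nat.descFactorial_succ n (N + 1), Nat.sub_sub]
    push_cast
    simp only [map_mul, map_pow, map_neg, map_one, map_natCast]
    ring

theorem exists_robertsDerivation_eq_zero {m : ℕ} (hm : 2 ≤ m) (n : ℕ) :
    ∃ f : MvPolynomial (Fin 7) ℂ, robertsDerivation m f = 0 ∧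
      restrictXV f = Polynomial.X * Polynomial.C (Polynomial.X ^ n) := by
  obtain ⟨b, hb₀, hb, hlower⟩ := exists_lowerOp_sequence
  let h (i : ℕ) := homogenizeSTU m (i * m + 1) (i * m) (i * m) (b i)
  have hh₀ : h 0 = X 0 := by simp [h, hb₀, homogenizeSTU]
  have hD₀ : robertsDerivation m (h 0) = 0 := by
    rw [hh₀]
    simp [robertsDerivation, mkDerivation_X]
  have hsucc (i : ℕ) : robertsDerivation m (h (i + 1)) = robertsDerivation m (X 6) * h i := by
    simp only [h]
    rw [robertsDerivation_homogenizeSTU hm (hb (i + 1)), hlower, homogenizeSTU_succ hm (hb i)]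
    simp [robertsDerivation, mkDerivation_X]
  refine ⟨_, (robertsDerivation_sum_range m n hD₀ hsucc n).trans ?_, ?_⟩
  · simp
  · rw [map_sum, Finset.sum_range_succ', Finset.sum_eq_zero]
    · rw [hh₀]
      simp [restrictXV, mul_comm]
    · intro i _
      rw [map_mul, restrictXV_homogenizeSTU _ _ _ _ i.succ_ne_zero (hb (i + 1)), mul_zero]

/-- **Roberts' algebra is not finitely generated:** for `m ≥ 2`, there is no finite
set `S` of invariants of the action `ρ` generating all invariants as a `ℂ`-algebra. -/
theorem roberts_invariant_algebra_not_finitely_generated (m : ℕ) (hm : 2 ≤ m) :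
    ¬ ∃ S : Finset (MvPolynomial (Fin 7) ℂ),
      (∀ f ∈ S, ∀ l : ℂ, robertsRho m l f = f) ∧
      (∀ f : MvPolynomial (Fin 7) ℂ, (∀ l : ℂ, robertsRho m l f = f) →
        f ∈ Algebra.adjoin ℂ (S : Set (MvPolynomial (Fin 7) ℂ))) := by
  rintro ⟨S, hS, hgen⟩
  simp only [robertsRho_invariant_iff] at hS hgen
  let n := S.sup (fun f => ((restrictXV f).coeff 1).natDegree) + 1
  obtain ⟨f, hf, hfn⟩ := exists_robertsDerivation_eq_zero hm n
  -- On invariants, the coefficient of `x v ^ n` is a derivation over evaluation at the origin.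
  have hzero : ∀ g ∈ Algebra.adjoin ℂ (S : Set (MvPolynomial (Fin 7) ℂ)),
      robertsDerivation m g = 0 ∧ ((restrictXV g).coeff 1).coeff n = 0 := by
    intro g hg
    induction hg using Algebra.adjoin_induction with
    | mem g hg =>
      refine ⟨hS g hg, Polynomial.coeff_eq_zero_of_natDegree_lt ?_⟩
      exact Nat.lt_succ_of_le
        (Finset.le_sup (f := fun f => ((restrictXV f).coeff 1).natDegree) hg)
    | algebraMap c =>
      refine ⟨Derivation.map_algebraMap _ _, ?_⟩
      rw [AlgHom.commutes, Polynomial.algebraMap_apply, Polynomial.coeff_C_succ,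
        Polynomial.coeff_zero]
    | add g k _ _ hg hk => simp [hg, hk]
    | mul g k _ _ hg hk =>
      refine ⟨by simp [Derivation.leibniz, hg.1, hk.1], ?_⟩
      have hconst {p : MvPolynomial (Fin 7) ℂ} (hp : robertsDerivation m p = 0) :
          (restrictXV p).coeff 0 = Polynomial.C (((restrictXV p).coeff 0).coeff 0) := by
        ext j
        rcases j with _ | j
        · simp
        · rw [coeff_restrictXV_eq_zero hp j.succ_ne_zero, Polynomial.coeff_C_succ]
      rw [map_mul, Polynomial.mul_coeff_one, Polynomial.coeff_add, hconst hg.1, hconst hk.1,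
        Polynomial.coeff_C_mul, Polynomial.coeff_mul_C, hg.2, hk.2]
      simp
  have h := (hzero f (hgen f hf)).2
  simp [-map_pow, hfn] at h
end
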